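/- arXiv:math/0410181 — 2 statements merged into one kernel-verified Lean document; each statement's English description precedes it below -/
import Mathlib

section
/- Let ψ : Ω → ℝ be bounded and measurable. Then ∫ g(η_0) ((η_0 − 1)/η_0) ψ(η) dQ_α(η) = α ∫ ψ(η + δ_0) dQ_α(η), where the integrand on the left is interpreted as 0 when η_0 = 0 (note η_0 ≥ 1 Q_α-almost surely) and (η + δ_0)_i = η_i + 1 if i = 0 and η_i otherwise. -/
open MeasureTheory

/-!
The integrand's weight depends on the site `0` only, and so does `η ↦ η + δ_0`. Resampling the
coordinate at `0` of a product measure leaves the measure unchanged, so the identity of measures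
`g(η_0) ((η_0 − 1)/η_0) dQ_α = α (η ↦ η + δ_0)_* Q_α` reduces to its one-site marginal version on
`ℕ`. That is the detailed balance `g(n + 1) (n/(n + 1)) μ⁰_α(n + 1) = α μ⁰_α(n)`, which is
`g(n + 1) w(n + 1) = α w(n)` after cancelling the size bias `n + 1`.
-/

section ProductMeasure

open Measure

variable {ι : Type*} {X : ι → Type*} [∀ i, MeasurableSpace (X i)]
  (μ : ∀ i, Measure (X i)) [∀ i, IsProbabilityMeasure (μ i)]

theorem eq_infinitePi_of_forall_cylinder_singleton [∀ i, Countable (X i)]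
    [∀ i, MeasurableSingletonClass (X i)] {Q : Measure (∀ i, X i)}
    (hQ : ∀ (s : Finset ι) (a : ∀ i, X i), Q {x | ∀ i ∈ s, x i = a i} = ∏ i ∈ s, μ i {a i}) :
    Q = infinitePi μ := by
  classical
  have (i : ι) : Nonempty (X i) := (μ i).nonempty_of_neZero
  refine IsProjectiveLimit.unique (fun s ↦ ?_) (isProjectiveLimit_infinitePi μ)
  refine ext_of_singleton fun b ↦ ?_
  obtain ⟨a, rfl⟩ : ∃ a, s.restrict a = b :=
    ⟨Function.updateFinset (Classical.arbitrary _) s b, Function.restrict_updateFinset _ _⟩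
  have h_preimage : s.restrict ⁻¹' {s.restrict a} = {x | ∀ i ∈ s, x i = a i} := by
    ext x
    simp [funext_iff]
  rw [map_apply (Finset.measurable_restrict s) (measurableSet_singleton _), h_preimage, hQ,
    pi_singleton]
  exact (Finset.prod_coe_sort s fun i ↦ μ i {a i}).symm

variable [DecidableEq ι] (i : ι)

theorem measurePreserving_update_infinitePi :
    MeasurePreserving (fun p : (∀ j, X j) × X i ↦ Function.update p.1 i p.2)
      ((infinitePi μ).prod (μ i)) (infinitePi μ) := by
  refine ⟨measurable_update', eq_infinitePi μ fun s t ht ↦ ?_⟩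
  have h_preimage : (fun p : (∀ j, X j) × X i ↦ Function.update p.1 i p.2) ⁻¹' (s : Set ι).pi t =
      ((s.erase i : Finset ι) : Set ι).pi t ×ˢ {y | i ∈ s → y ∈ t i} := by
    ext p
    rw [Set.mem_preimage, Set.update_mem_pi_iff, Finset.coe_erase]
    rfl
  rw [map_apply measurable_update' (.pi s.countable_toSet fun j _ ↦ ht j), h_preimage, prod_prod,
    infinitePi_pi μ fun j _ ↦ ht j]
  by_cases hi : i ∈ s
  · simp [hi, Finset.prod_erase_mul]
  · simp [hi]

variable {i}

theorem infinitePi_withDensity_eval {f : X i → ENNReal} (hf : Measurable f) :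
    (infinitePi μ).withDensity (fun x ↦ f (x i)) =
      ((infinitePi μ).prod ((μ i).withDensity f)).map (fun p ↦ Function.update p.1 i p.2) := by
  have h_update := measurePreserving_update_infinitePi μ i
  ext s hs
  rw [map_apply h_update.measurable hs, prod_withDensity_right hf, withDensity_apply _ hs,
    withDensity_apply _ (h_update.measurable hs),
    ← h_update.setLIntegral_comp_preimage hs (by fun_prop : Measurable fun x : ∀ j, X j ↦ f (x i))]
  simp only [Function.update_self]

theorem measurable_update_eval {T : X i → X i} (hT : Measurable T) :
    Measurable fun x : ∀ j, X j ↦ Function.update x i (T (x i)) :=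
  measurable_update'.comp (measurable_id.prodMk (hT.comp (measurable_pi_apply i)))

theorem infinitePi_map_update {T : X i → X i} (hT : Measurable T) :
    (infinitePi μ).map (fun x ↦ Function.update x i (T (x i))) =
      ((infinitePi μ).prod ((μ i).map T)).map (fun p ↦ Function.update p.1 i p.2) := by
  have h_update := measurePreserving_update_infinitePi μ i
  have h_prod : (infinitePi μ).prod ((μ i).map T) =
      ((infinitePi μ).prod (μ i)).map (Prod.map id T) := by
    rw [← map_prod_map _ _ measurable_id hT, map_id]
  rw [h_prod, map_map measurable_update' (measurable_id.prodMap hT)]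
  nth_rw 1 [← h_update.map_eq]
  rw [map_map (measurable_update_eval hT) h_update.measurable]
  congr 1
  ext1 p
  simp

theorem infinitePi_withDensity_eval_eq_smul_map_update {f : X i → ENNReal} (hf : Measurable f)
    {T : X i → X i} (hT : Measurable T) {c : ENNReal}
    (h : (μ i).withDensity f = c • (μ i).map T) :
    (infinitePi μ).withDensity (fun x ↦ f (x i)) =
      c • (infinitePi μ).map (fun x ↦ Function.update x i (T (x i))) := by
  rw [infinitePi_withDensity_eval μ hf, infinitePi_map_update μ hT, h, prod_smul_right,
    Measure.map_smul]

end ProductMeasure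

section ZeroRange

/-- The unnormalised one-site weight `w(k) = α^k / (g(1) ⋯ g(k))` of the zero-range process with
jump rate `g` at fugacity `α`. -/
noncomputable def zeroRangeWeight (g : ℕ → ℝ) (α : ℝ) (k : ℕ) : ℝ :=
  α ^ k / ∏ j ∈ Finset.Icc 1 k, g j

/-- The normalising constant `Z_α` of the one-site weights, with the value `0` when they are not
summable. -/
noncomputable def zeroRangePartition (g : ℕ → ℝ) (α : ℝ) : ℝ :=
  ∑' k, zeroRangeWeight g α k

/-- The mean number `ρ(α)` of particles per site, with the value `0` when it is infinite. -/
noncomputable def zeroRangeDensity (g : ℕ → ℝ) (α : ℝ) : ℝ :=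
  ∑' k : ℕ, (k : ℝ) * (zeroRangeWeight g α k / zeroRangePartition g α)

/-- The mass `μ⁰_α(n)` of the palm marginal: the size-biased version of the one-site marginal
`μ_α`, which is the law of the number of particles at the site of a tagged particle. -/
noncomputable def palmMass (g : ℕ → ℝ) (α : ℝ) (n : ℕ) : ℝ :=
  (n : ℝ) / zeroRangeDensity g α * (zeroRangeWeight g α n / zeroRangePartition g α)

/-- The rate `g(n) (n − 1)/n` at which a particle other than the tagged one leaves a site holding
the tagged particle and `n` particles in total. Division by zero makes it `0` at `n = 0`. -/
noncomputable def untaggedRate (g : ℕ → ℝ) (n : ℕ) : ℝ :=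
  g n * (((n : ℝ) - 1) / (n : ℝ))

variable {g : ℕ → ℝ} {α : ℝ}

theorem mul_zeroRangeWeight_succ {n : ℕ} (hg : g (n + 1) ≠ 0) :
    g (n + 1) * zeroRangeWeight g α (n + 1) = α * zeroRangeWeight g α n := by
  rw [zeroRangeWeight, zeroRangeWeight, Finset.prod_Icc_succ_top (by lia), pow_succ]
  field_simp

@[simp]
theorem untaggedRate_zero : untaggedRate g 0 = 0 := by
  simp [untaggedRate]

theorem untaggedRate_succ (n : ℕ) : untaggedRate g (n + 1) = g (n + 1) * (n / (n + 1)) := by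
  simp [untaggedRate]

theorem untaggedRate_nonneg (hg : ∀ k, 1 ≤ k → 0 ≤ g k) (n : ℕ) : 0 ≤ untaggedRate g n := by
  cases n with
  | zero => exact untaggedRate_zero.ge
  | succ n =>
    rw [untaggedRate_succ]
    exact mul_nonneg (hg _ n.succ_pos) (by positivity)

theorem untaggedRate_mul_palmMass_succ {n : ℕ} (hg : g (n + 1) ≠ 0) :
    untaggedRate g (n + 1) * palmMass g α (n + 1) = α * palmMass g α n := by
  have h_succ : (n : ℝ) + 1 ≠ 0 := n.cast_add_one_ne_zero
  calc untaggedRate g (n + 1) * palmMass g α (n + 1)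
      = (g (n + 1) * zeroRangeWeight g α (n + 1)) *
          (n / zeroRangeDensity g α / zeroRangePartition g α) * ((n + 1) / (n + 1)) := by
        rw [untaggedRate_succ, palmMass]
        push_cast
        ring
    _ = α * palmMass g α n := by
        rw [mul_zeroRangeWeight_succ hg, div_self h_succ, palmMass]
        ring

theorem withDensity_untaggedRate (hg : ∀ k, 1 ≤ k → 0 < g k) (hα : 0 ≤ α) {μ : Measure ℕ}
    (hμ : ∀ n, μ {n} = ENNReal.ofReal (palmMass g α n)) :
    μ.withDensity (fun n ↦ ENNReal.ofReal (untaggedRate g n)) =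
      ENNReal.ofReal α • μ.map Nat.succ := by
  refine Measure.ext_of_singleton fun n ↦ ?_
  rw [withDensity_apply _ (measurableSet_singleton n), lintegral_singleton, Measure.smul_apply,
    Measure.map_apply (measurable_of_countable _) (measurableSet_singleton n), smul_eq_mul]
  cases n with
  | zero => simp [Set.preimage]
  | succ n =>
    have h_preimage : Nat.succ ⁻¹' {n + 1} = {n} := by
      ext
      simp
    rw [h_preimage, hμ, hμ, ← ENNReal.ofReal_mul (untaggedRate_nonneg (fun k hk ↦ (hg k hk).le) _),
      ← ENNReal.ofReal_mul hα, untaggedRate_mul_palmMass_succ (hg _ n.succ_pos).ne']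

theorem computation_lemma_second_identity_general {ι E : Type*} [DecidableEq ι]
    [NormedAddCommGroup E] [NormedSpace ℝ E]
    (hg : ∀ k, 1 ≤ k → 0 < g k) (hα : 0 ≤ α) (i : ι)
    (ν : ι → Measure ℕ) [∀ j, IsProbabilityMeasure (ν j)]
    (hν : ∀ n, ν i {n} = ENNReal.ofReal (palmMass g α n)) {ψ : (ι → ℕ) → E}
    (hψ : Integrable ψ ((Measure.infinitePi ν).map fun η ↦ Function.update η i (η i + 1))) :
    ∫ η, untaggedRate g (η i) • ψ η ∂Measure.infinitePi ν =
      α • ∫ η, ψ (Function.update η i (η i + 1)) ∂Measure.infinitePi ν := by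
  set Q := Measure.infinitePi ν
  have h_rate : Measurable fun n ↦ ENNReal.ofReal (untaggedRate g n) := measurable_of_countable _
  have h_rate_eval : Measurable fun η : ι → ℕ ↦ ENNReal.ofReal (untaggedRate g (η i)) :=
    h_rate.comp (measurable_pi_apply i)
  have h_add : Measurable fun η : ι → ℕ ↦ Function.update η i (η i + 1) :=
    measurable_update_eval (measurable_of_countable Nat.succ)
  have h_measure : Q.withDensity (fun η ↦ ENNReal.ofReal (untaggedRate g (η i))) =
      ENNReal.ofReal α • Q.map (fun η ↦ Function.update η i (η i + 1)) :=
    infinitePi_withDensity_eval_eq_smul_map_update ν h_rate (measurable_of_countable Nat.succ)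
      (withDensity_untaggedRate hg hα hν)
  calc ∫ η, untaggedRate g (η i) • ψ η ∂Q
      = ∫ η, ψ η ∂Q.withDensity (fun η ↦ ENNReal.ofReal (untaggedRate g (η i))) := by
        rw [integral_withDensity_eq_integral_toReal_smul h_rate_eval (by simp)]
        simp only [ENNReal.toReal_ofReal (untaggedRate_nonneg (fun k hk ↦ (hg k hk).le) _)]
    _ = α • ∫ η, ψ (Function.update η i (η i + 1)) ∂Q := by
        rw [h_measure, integral_smul_measure, ENNReal.toReal_ofReal hα,
          integral_map h_add.aemeasurable hψ.aestronglyMeasurable]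

end ZeroRange

/-- Let `Q_α` be the product probability measure on `Ω = ℕ^(ℤ^d)` whose
marginal at site `0` is the palm marginal `μ⁰_α` and whose marginal at every other site is
`μ_α`.  Let `ψ : Ω → ℝ` be bounded and measurable.  Then
`∫ g (η 0) ((η 0 − 1)/η 0) ψ(η) dQ_α(η) = α ∫ ψ(η + δ_0) dQ_α(η)`, where the integrand on
the left is interpreted as `0` when `η 0 = 0` (note `η 0 ≥ 1` `Q_α`-a.s.; in Lean the
convention `x / 0 = 0` together with `g 0 = 0` makes the formula literally correct) and
`(η + δ_0) i = η i + 1` if `i = 0` and `η i` otherwise. -/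
theorem computation_lemma_second_identity
    (d : ℕ) (hd : 1 ≤ d)
    (g : ℕ → ℝ) (hg0 : g 0 = 0) (hgpos : ∀ k : ℕ, 1 ≤ k → 0 < g k)
    (α : ℝ) (hα0 : 0 < α)
    (hα : ENNReal.ofReal α <
      Filter.liminf (fun k : ℕ => ENNReal.ofReal (g k)) Filter.atTop)
    (w : ℕ → ℝ) (hw : ∀ k : ℕ, w k = α ^ k / ∏ j ∈ Finset.Icc 1 k, g j)
    (Z : ℝ) (hZ : Z = ∑' k : ℕ, w k)
    (ρ : ℝ) (hρ : ρ = ∑' k : ℕ, (k : ℝ) * (w k / Z))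
    (ν : (Fin d → ℤ) → Measure ℕ) (hνprob : ∀ i, IsProbabilityMeasure (ν i))
    (hν0 : ∀ n : ℕ, ν 0 {n} = ENNReal.ofReal (((n : ℝ) / ρ) * (w n / Z)))
    (hνi : ∀ i : Fin d → ℤ, i ≠ 0 → ∀ n : ℕ, ν i {n} = ENNReal.ofReal (w n / Z))
    (Q : Measure ((Fin d → ℤ) → ℕ)) (hQprob : IsProbabilityMeasure Q)
    (hQ : ∀ (s : Finset (Fin d → ℤ)) (a : (Fin d → ℤ) → ℕ),
      Q {η | ∀ i ∈ s, η i = a i} = ∏ i ∈ s, ν i {a i})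
    (ψ : ((Fin d → ℤ) → ℕ) → ℝ) (hψmeas : Measurable ψ)
    (hψbdd : ∃ C : ℝ, ∀ η, |ψ η| ≤ C) :
    ∫ η, g (η 0) * (((η 0 : ℝ) - 1) / (η 0 : ℝ)) * ψ η ∂Q =
      α * ∫ η, ψ (Function.update η 0 (η 0 + 1)) ∂Q := by
  obtain ⟨C, hC⟩ := hψbdd
  obtain rfl : w = zeroRangeWeight g α := funext hw
  subst hZ hρ
  obtain rfl := eq_infinitePi_of_forall_cylinder_singleton ν hQ
  exact computation_lemma_second_identity_general hgpos hα0.le 0 ν hν0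
    (.of_bound hψmeas.aestronglyMeasurable C (ae_of_all _ hC))
end

section
/- Let j ∈ ℤ^d with j ≠ 0 and let ψ : Ω → ℝ be bounded and measurable. Then ∫ (η_j + 1)(g(η_0)/η_0) ψ(η) dQ_α(η) = ∫ g(η_0) ψ(T_{−j} η) dQ_α(η), where (T_{−j} η)_i = η_{i−j} + 1_{[i = 0]} − 1_{[i = j]} (well defined in ℕ^{ℤ^d} whenever η_0 ≥ 1, which holds Q_α-almost surely), and g(η_0)/η_0 is interpreted as 0 when η_0 = 0. -/
open MeasureTheory

/-!
The Palm marginal is a size bias of `μ_α`: with `c = α / ρ(α)` it satisfies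
`g (n + 1) μ⁰_α(n + 1) = c (n + 1) μ_α(n)`. Hence weighting `μ⁰_α` by `g k / k` gives `c` times the
law of `k + 1` under `μ_α`, while weighting it by `g k` and then shifting down gives `c` times
`μ_α` weighted by `k + 1`. Using the first form at site `0` on the left-hand side, and the second
form at site `j` on the right-hand side after translating the Palm site from `0` to `j`, turns both
sides into `c ∫ (η j + 1) ψ(η + δ₀) dP`, where `P` is the product measure with all marginals `μ_α`.
-/

open Function
open scoped ENNReal NNReal

section InfinitePi

variable {ι : Type*} {X : ι → Type*} [∀ i, MeasurableSpace (X i)] {ν : ∀ i, Measure (X i)}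

theorem eq_infinitePi_of_forall_cylinder [∀ i, Countable (X i)]
    [∀ i, MeasurableSingletonClass (X i)] [∀ i, IsProbabilityMeasure (ν i)]
    {Q : Measure (∀ i, X i)}
    (hQ : ∀ (s : Finset ι) (a : ∀ i, X i), Q {η | ∀ i ∈ s, η i = a i} = ∏ i ∈ s, ν i {a i}) :
    Q = Measure.infinitePi ν := by
  refine ((Measure.isProjectiveLimit_infinitePi ν).unique fun s ↦ ?_).symm
  have (i : ι) : Nonempty (X i) := nonempty_of_isProbabilityMeasure (ν i)
  refine Measure.ext_of_singleton fun a ↦ ?_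
  obtain ⟨b, rfl⟩ : ∃ b, s.restrict b = a := Subtype.surjective_restrict _ a
  have hcyl : s.restrict ⁻¹' {s.restrict b} = {η | ∀ i ∈ s, η i = b i} := by
    ext η
    simp [funext_iff]
  rw [Measure.map_apply (by fun_prop) (measurableSet_singleton _), hcyl, hQ, Measure.pi_singleton]
  exact (Finset.prod_coe_sort s fun i ↦ ν i {b i}).symm

variable [DecidableEq ι]

instance isProbabilityMeasure_update [∀ i, IsProbabilityMeasure (ν i)] (x : ι) (m : Measure (X x))
    [IsProbabilityMeasure m] (i : ι) : IsProbabilityMeasure (update ν x m i) := by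
  obtain rfl | hi := eq_or_ne i x
  · rwa [update_self]
  · rw [update_of_ne hi]
    infer_instance

theorem map_update_infinitePi_prod [∀ i, IsProbabilityMeasure (ν i)] (x : ι) (m : Measure (X x))
    [IsProbabilityMeasure m] :
    ((Measure.infinitePi ν).prod m).map (fun p ↦ update p.1 x p.2) =
      Measure.infinitePi (update ν x m) := by
  refine Measure.eq_infinitePi _ fun s t ht ↦ ?_
  rw [Measure.map_apply measurable_update' (.pi s.countable_toSet fun i _ ↦ ht i)]
  have hrest : ∏ i ∈ s.erase x, update ν x m i (t i) = ∏ i ∈ s.erase x, ν i (t i) :=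
    Finset.prod_congr rfl fun i hi ↦ by rw [update_of_ne (Finset.ne_of_mem_erase hi)]
  have hbox : (fun p : (∀ i, X i) × X x ↦ update p.1 x p.2) ⁻¹' (s : Set ι).pi t =
      (s.erase x : Set ι).pi t ×ˢ {k | x ∈ s → k ∈ t x} := by
    ext ⟨η, k⟩
    rw [Finset.coe_erase]
    exact Set.update_mem_pi_iff
  rw [hbox, Measure.prod_prod, Measure.infinitePi_pi _ fun i _ ↦ ht i, ← hrest]
  by_cases hx : x ∈ s
  · simp only [hx, true_imp_iff, Set.ofPred_mem_eq]
    rw [← Finset.prod_erase_mul s _ hx, update_self]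
  · simp only [hx, false_imp_iff, Set.ofPred_true, measure_univ, mul_one]
    rw [Finset.erase_eq_of_notMem hx]

theorem lintegral_infinitePi_update [∀ i, IsProbabilityMeasure (ν i)] (x : ι) (m : Measure (X x))
    [IsProbabilityMeasure m] {F : (∀ i, X i) → ℝ≥0∞} (hF : Measurable F) :
    ∫⁻ η, F η ∂Measure.infinitePi (update ν x m) =
      ∫⁻ η, ∫⁻ k, F (update η x k) ∂m ∂Measure.infinitePi ν := by
  rw [← map_update_infinitePi_prod, lintegral_map hF measurable_update',
    lintegral_prod _ (by fun_prop)]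

theorem lintegral_infinitePi_update_eq_mul_of_fiberwise [∀ i, IsProbabilityMeasure (ν i)] {x : ι}
    {m : Measure (X x)} [IsProbabilityMeasure m] {c : ℝ≥0∞} {F G : (∀ i, X i) → ℝ≥0∞}
    (hF : Measurable F) (hG : Measurable G)
    (h : ∀ η, ∫⁻ k, F (update η x k) ∂m = c * ∫⁻ k, G (update η x k) ∂ν x) :
    ∫⁻ η, F η ∂Measure.infinitePi (update ν x m) = c * ∫⁻ η, G η ∂Measure.infinitePi ν := by
  have hG' : ∫⁻ η, G η ∂Measure.infinitePi ν =
      ∫⁻ η, ∫⁻ k, G (update η x k) ∂ν x ∂Measure.infinitePi ν := by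
    rw [← lintegral_infinitePi_update x (ν x) hG, update_eq_self]
  rw [lintegral_infinitePi_update x m hF, hG', lintegral_congr h]
  exact lintegral_const_mul c (hG.comp measurable_update').lintegral_prod_right'

end InfinitePi

theorem integral_smul_eq_of_withDensity_eq_map {X Y E : Type*} [MeasurableSpace X]
    [MeasurableSpace Y] [NormedAddCommGroup E] [NormedSpace ℝ E] {μ : Measure X} {ν : Measure Y}
    {f : X → ℝ≥0} {h : Y → ℝ≥0} {T : Y → X} (hf : Measurable f) (hh : Measurable h)
    (hT : Measurable T)
    (H : μ.withDensity (fun x ↦ f x) = (ν.withDensity fun y ↦ h y).map T)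
    {ψ : X → E} (hψ : StronglyMeasurable ψ) :
    ∫ x, f x • ψ x ∂μ = ∫ y, h y • ψ (T y) ∂ν := by
  rw [← integral_withDensity_eq_integral_smul hf, H,
    integral_map hT.aemeasurable hψ.aestronglyMeasurable,
    integral_withDensity_eq_integral_smul hh]

/-- The single-site relation between a law `μ` on `ℕ` and its Palm version `μ₀`, for jump rates `g`:
under the zero range weights `μ n = α ^ n / (Z g(1) ⋯ g(n))` and `μ₀ n = n μ n / ρ` it holds
with `c = α / ρ`. -/
structure IsPalmBalanced (g : ℕ → ℝ≥0) (c : ℝ≥0∞) (μ μ₀ : Measure ℕ) : Prop where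
  rate_zero : g 0 = 0
  balance (n : ℕ) : g (n + 1) * μ₀ {n + 1} = c * ((n + 1) * μ {n})

namespace IsPalmBalanced

variable {g : ℕ → ℝ≥0} {c : ℝ≥0∞} {μ μ₀ : Measure ℕ}

theorem lintegral_div_mul (h : IsPalmBalanced g c μ μ₀) (F : ℕ → ℝ≥0∞) :
    ∫⁻ k, (g k / k : ℝ≥0) * F k ∂μ₀ = c * ∫⁻ k, F (k + 1) ∂μ := by
  have hterm (n : ℕ) : ((g (n + 1) / (n + 1 : ℕ) : ℝ≥0) : ℝ≥0∞) * μ₀ {n + 1} = c * μ {n} := by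
    have hn : ((n : ℝ≥0∞) + 1) ≠ 0 := by positivity
    have hn' : ((n : ℝ≥0∞) + 1) ≠ ∞ := by finiteness
    calc
      _ = (n + 1 : ℝ≥0∞)⁻¹ * (g (n + 1) * μ₀ {n + 1}) := by
        rw [ENNReal.coe_div (by positivity), ENNReal.div_eq_inv_mul, mul_assoc]
        simp
      _ = c * ((n + 1 : ℝ≥0∞)⁻¹ * (n + 1) * μ {n}) := by rw [h.balance]; ring
      _ = c * μ {n} := by rw [ENNReal.inv_mul_cancel hn hn', one_mul]
  rw [lintegral_countable', lintegral_countable', tsum_eq_zero_add' ENNReal.summable,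
    ← ENNReal.tsum_mul_left]
  simp only [h.rate_zero, zero_div, ENNReal.coe_zero, zero_mul, zero_add]
  exact tsum_congr fun n ↦ by rw [mul_right_comm, hterm, mul_assoc, mul_comm (F _)]

theorem lintegral_mul_pred (h : IsPalmBalanced g c μ μ₀) (F : ℕ → ℝ≥0∞) :
    ∫⁻ k, g k * F (k - 1) ∂μ₀ = c * ∫⁻ k, (k + 1) * F k ∂μ := by
  rw [lintegral_countable', lintegral_countable', tsum_eq_zero_add' ENNReal.summable,
    ← ENNReal.tsum_mul_left]
  simp only [h.rate_zero, ENNReal.coe_zero, zero_mul, zero_add, Nat.add_sub_cancel]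
  exact tsum_congr fun n ↦ by rw [mul_right_comm, h.balance]; ring

end IsPalmBalanced

/-- The product measure on `ι → S` with marginal `μ₀` at the site `x` and `μ` at all other sites;
it is the paper's `Q_α` when `μ₀` is the Palm version of `μ = μ_α` and `x = 0`. -/
noncomputable def palmAt {ι S : Type*} [DecidableEq ι] [MeasurableSpace S] (μ μ₀ : Measure S)
    (x : ι) : Measure (ι → S) :=
  Measure.infinitePi (update (fun _ ↦ μ) x μ₀)

theorem map_comp_equiv_palmAt {ι κ S : Type*} [DecidableEq ι] [DecidableEq κ] [MeasurableSpace S]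
    {μ μ₀ : Measure S} [IsProbabilityMeasure μ] [IsProbabilityMeasure μ₀] (σ : κ ≃ ι) (y : κ) :
    (palmAt μ μ₀ (σ y)).map (· ∘ σ) = palmAt μ μ₀ y := by
  have hfam : (fun i ↦ update (fun _ ↦ μ) y μ₀ (σ.symm i)) = update (fun _ ↦ μ) (σ y) μ₀ :=
    update_comp_equiv _ σ.symm _ _
  have hcomp : (· ∘ σ : (ι → S) → κ → S) = MeasurableEquiv.piCongrLeft (fun _ ↦ S) σ.symm := by
    ext η i
    simpa using (MeasurableEquiv.piCongrLeft_apply_apply (β := fun _ ↦ S) σ.symm η (σ i)).symm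
  rw [palmAt, ← hfam, hcomp]
  exact Measure.infinitePi_map_piCongrLeft (X := fun _ ↦ S) (update (fun _ ↦ μ) y μ₀) σ.symm

theorem eq_palmAt_of_forall_cylinder {ι S : Type*} [DecidableEq ι] [MeasurableSpace S] [Countable S]
    [MeasurableSingletonClass S] {ν : ι → Measure S} [∀ i, IsProbabilityMeasure (ν i)]
    {μ : Measure S} {x : ι} (hν : ∀ i ≠ x, ν i = μ) {Q : Measure (ι → S)}
    (hQ : ∀ (s : Finset ι) (a : ι → S), Q {η | ∀ i ∈ s, η i = a i} = ∏ i ∈ s, ν i {a i}) :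
    Q = palmAt μ (ν x) x := by
  rw [eq_infinitePi_of_forall_cylinder hQ, palmAt, ← eq_update_iff.2 ⟨rfl, hν⟩]

/-- The configuration `η ∘ σ` after moving one particle from `y` to `x`. For `σ i = i - j`, `x = 0`,
`y = j` it is the paper's `T_{-j} η`; the subtraction truncates where `η (σ y) = 0`. -/
def relabelJump {ι : Type*} [DecidableEq ι] (σ : Equiv.Perm ι) (x y : ι) (η : ι → ℕ) : ι → ℕ :=
  η ∘ σ + Pi.single x 1 - Pi.single y 1

section PalmAt

variable {ι : Type*} [DecidableEq ι]

theorem measurable_relabelJump (σ : Equiv.Perm ι) (x y : ι) : Measurable (relabelJump σ x y) := by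
  unfold relabelJump
  fun_prop

variable {g : ℕ → ℝ≥0} {c : ℝ≥0∞} {μ μ₀ : Measure ℕ} [IsProbabilityMeasure μ]
  [IsProbabilityMeasure μ₀] {F : (ι → ℕ) → ℝ≥0∞}

theorem lintegral_div_mul_palmAt (h : IsPalmBalanced g c μ μ₀) (x : ι) (hF : Measurable F) :
    ∫⁻ η, (g (η x) / η x : ℝ≥0) * F η ∂palmAt μ μ₀ x =
      c * ∫⁻ η, F (η + Pi.single x 1) ∂Measure.infinitePi (fun _ ↦ μ) := by
  refine lintegral_infinitePi_update_eq_mul_of_fiberwise (by fun_prop) (by fun_prop) fun η ↦ ?_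
  have hadd (k : ℕ) : update η x k + Pi.single x 1 = update η x (k + 1) := by
    ext i
    obtain rfl | hi := eq_or_ne i x <;> simp [*]
  simpa only [update_self, hadd] using h.lintegral_div_mul fun k ↦ F (update η x k)

theorem lintegral_mul_sub_single_palmAt (h : IsPalmBalanced g c μ μ₀) (x : ι) (hF : Measurable F) :
    ∫⁻ η, g (η x) * F (η - Pi.single x 1) ∂palmAt μ μ₀ x =
      c * ∫⁻ η, (η x + 1) * F η ∂Measure.infinitePi (fun _ ↦ μ) := by
  refine lintegral_infinitePi_update_eq_mul_of_fiberwise (by fun_prop) (by fun_prop) fun η ↦ ?_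
  have hsub (k : ℕ) : update η x k - Pi.single x 1 = update η x (k - 1) := by
    ext i
    obtain rfl | hi := eq_or_ne i x <;> simp [*]
  simpa only [update_self, hsub] using h.lintegral_mul_pred fun k ↦ F (update η x k)

theorem lintegral_relabelJump_palmAt (h : IsPalmBalanced g c μ μ₀) (σ : Equiv.Perm ι) {x y : ι}
    (hσ : σ y = x) (hxy : x ≠ y) (hF : Measurable F) :
    ∫⁻ η, ((η y + 1) * (g (η x) / η x) : ℝ≥0) * F η ∂palmAt μ μ₀ x =
      ∫⁻ η, g (η x) * F (relabelJump σ x y η) ∂palmAt μ μ₀ x := by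
  have hcomm (η : ι → ℕ) :
      η + Pi.single x 1 - Pi.single y 1 = η - Pi.single y 1 + Pi.single x 1 := by
    ext i
    obtain rfl | hi := eq_or_ne i x <;> simp [*]
  calc
    _ = ∫⁻ η, (g (η x) / η x : ℝ≥0) * ((η y + 1) * F η) ∂palmAt μ μ₀ x :=
        lintegral_congr fun η ↦ by push_cast; ring
    _ = c * ∫⁻ η, (η y + 1) * F (η + Pi.single x 1) ∂Measure.infinitePi (fun _ ↦ μ) := by
        rw [lintegral_div_mul_palmAt h x (by fun_prop)]
        simp [hxy.symm]
    _ = ∫⁻ η, g (η y) * F (η + Pi.single x 1 - Pi.single y 1) ∂palmAt μ μ₀ y := by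
        simp only [hcomm]
        exact (lintegral_mul_sub_single_palmAt h y (by fun_prop)).symm
    _ = _ := by
        rw [← map_comp_equiv_palmAt σ y, lintegral_map (by fun_prop) (by fun_prop), hσ]
        simp only [relabelJump, comp_apply, hσ]

theorem withDensity_palmAt_eq_map_relabelJump (h : IsPalmBalanced g c μ μ₀) (σ : Equiv.Perm ι)
    {x y : ι} (hσ : σ y = x) (hxy : x ≠ y) :
    (palmAt μ μ₀ x).withDensity (fun η ↦ ((η y + 1) * (g (η x) / η x) : ℝ≥0)) =
      ((palmAt μ μ₀ x).withDensity fun η ↦ g (η x)).map (relabelJump σ x y) := by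
  refine Measure.ext_of_lintegral _ fun F hF ↦ ?_
  have hT := measurable_relabelJump σ x y
  rw [lintegral_map hF hT, lintegral_withDensity_eq_lintegral_mul _ (by fun_prop) hF,
    lintegral_withDensity_eq_lintegral_mul _ (by fun_prop) (by fun_prop)]
  exact lintegral_relabelJump_palmAt h σ hσ hxy hF

end PalmAt

section ZeroRangeWeights

variable {g : ℕ → ℝ} {α : ℝ} {w : ℕ → ℝ}

theorem rate_nonneg (hg0 : g 0 = 0) (hgpos : ∀ k, 1 ≤ k → 0 < g k) : ∀ k, 0 ≤ g k
  | 0 => hg0.ge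
  | k + 1 => (hgpos (k + 1) k.succ_pos).le

theorem zeroRangeWeight_nonneg (hg : ∀ k, 0 ≤ g k) (hα : 0 ≤ α)
    (hw : ∀ k, w k = α ^ k / ∏ i ∈ Finset.Icc 1 k, g i) (k : ℕ) : 0 ≤ w k := by
  rw [hw]
  exact div_nonneg (pow_nonneg hα k) (Finset.prod_nonneg fun i _ ↦ hg i)

theorem rate_mul_zeroRangeWeight_succ (hgpos : ∀ k, 1 ≤ k → 0 < g k)
    (hw : ∀ k, w k = α ^ k / ∏ i ∈ Finset.Icc 1 k, g i) (k : ℕ) :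
    g (k + 1) * w (k + 1) = α * w k := by
  have hg := hgpos (k + 1) k.succ_pos
  rw [hw, hw, Finset.prod_Icc_succ_top k.succ_pos, pow_succ]
  field_simp

theorem isPalmBalanced_of_zeroRangeWeight {g : ℕ → ℝ≥0} {Z ρ : ℝ} {μ μ₀ : Measure ℕ}
    (hg0 : g 0 = 0) (hα : 0 ≤ α) (hρ : 0 ≤ ρ)
    (hwsucc : ∀ k, g (k + 1) * w (k + 1) = α * w k)
    (hμ : ∀ n, μ {n} = ENNReal.ofReal (w n / Z))
    (hμ₀ : ∀ n : ℕ, μ₀ {n} = ENNReal.ofReal (n / ρ * (w n / Z))) :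
    IsPalmBalanced g (ENNReal.ofReal (α / ρ)) μ μ₀ where
  rate_zero := hg0
  balance n := by
    rw [hμ, hμ₀, ← ENNReal.ofReal_coe_nnreal, ← ENNReal.ofReal_mul (g (n + 1)).coe_nonneg,
      ← Nat.cast_succ, ← ENNReal.ofReal_natCast, ← ENNReal.ofReal_mul (by positivity),
      ← ENNReal.ofReal_mul (by positivity)]
    congr 1
    calc
      _ = (n + 1 : ℕ) / (ρ * Z) * (g (n + 1) * w (n + 1)) := by ring
      _ = _ := by rw [hwsucc]; ring

end ZeroRangeWeights

theorem computation_lemma_fourth_identity_general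
    {ι : Type*} [DecidableEq ι]
    {g : ℕ → ℝ} (hg0 : g 0 = 0) (hgpos : ∀ k : ℕ, 1 ≤ k → 0 < g k)
    {α : ℝ} (hα0 : 0 < α)
    {w : ℕ → ℝ} (hw : ∀ k : ℕ, w k = α ^ k / ∏ i ∈ Finset.Icc 1 k, g i)
    {Z : ℝ} (hZ : Z = ∑' k : ℕ, w k)
    {ρ : ℝ} (hρ : ρ = ∑' k : ℕ, (k : ℝ) * (w k / Z))
    {ν : ι → Measure ℕ} [∀ i, IsProbabilityMeasure (ν i)]
    {x y : ι} (hxy : x ≠ y)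
    (hνx : ∀ n : ℕ, ν x {n} = ENNReal.ofReal (((n : ℝ) / ρ) * (w n / Z)))
    (hνi : ∀ i : ι, i ≠ x → ∀ n : ℕ, ν i {n} = ENNReal.ofReal (w n / Z))
    {Q : Measure (ι → ℕ)}
    (hQ : ∀ (s : Finset ι) (a : ι → ℕ), Q {η | ∀ i ∈ s, η i = a i} = ∏ i ∈ s, ν i {a i})
    (σ : Equiv.Perm ι) (hσ : σ y = x)
    {T : (ι → ℕ) → ι → ℕ}
    (hT : ∀ η i, T η i = η (σ i) + (if i = x then 1 else 0) - (if i = y then 1 else 0))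
    {ψ : (ι → ℕ) → ℝ} (hψ : Measurable ψ) :
    ∫ η, ((η y : ℝ) + 1) * (g (η x) / (η x : ℝ)) * ψ η ∂Q =
      ∫ η, g (η x) * ψ (T η) ∂Q := by
  have hg := rate_nonneg hg0 hgpos
  have hwsucc := rate_mul_zeroRangeWeight_succ hgpos hw
  have hw0 := zeroRangeWeight_nonneg hg hα0.le hw
  have hZ0 : 0 ≤ Z := hZ ▸ tsum_nonneg hw0
  have hρ0 : 0 ≤ ρ := hρ ▸ tsum_nonneg fun k ↦ mul_nonneg k.cast_nonneg (div_nonneg (hw0 k) hZ0)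
  lift g to ℕ → ℝ≥0 using hg
  have hbal : IsPalmBalanced g (ENNReal.ofReal (α / ρ)) (ν y) (ν x) :=
    isPalmBalanced_of_zeroRangeWeight (NNReal.coe_eq_zero.1 hg0) hα0.le hρ0 hwsucc
      (hνi y hxy.symm) hνx
  have hν (i : ι) (hi : i ≠ x) : ν i = ν y :=
    Measure.ext_of_singleton fun n ↦ by rw [hνi i hi, hνi y hxy.symm]
  obtain rfl : Q = palmAt (ν y) (ν x) x := eq_palmAt_of_forall_cylinder hν hQ
  obtain rfl : T = relabelJump σ x y := by
    ext η i
    simp [hT, relabelJump, Pi.single_apply]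
  simpa [NNReal.smul_def] using integral_smul_eq_of_withDensity_eq_map (by fun_prop) (by fun_prop)
    (measurable_relabelJump σ x y) (withDensity_palmAt_eq_map_relabelJump hbal σ hσ hxy)
    hψ.stronglyMeasurable

/-- Let `Q_α` be the product probability measure on `Ω = ℕ^(ℤ^d)` whose
marginal at site `0` is the palm marginal `μ⁰_α` and whose marginal at every other site is
`μ_α`.  Let `j ∈ ℤ^d`, `j ≠ 0`, and let `ψ : Ω → ℝ` be bounded and measurable.  Then
`∫ (η j + 1)(g (η 0)/η 0) ψ(η) dQ_α(η) = ∫ g (η 0) ψ(T_{−j} η) dQ_α(η)`, where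
`(T_{−j} η) i = η (i−j) + 1_{i=0} − 1_{i=j}` (well defined in `ℕ^(ℤ^d)` with truncated
`ℕ`-subtraction, agreeing with the intended configuration whenever `η 0 ≥ 1`, which holds
`Q_α`-a.s.), and `g (η 0)/η 0` is interpreted as `0` when `η 0 = 0` (Lean's convention
`x / 0 = 0` together with `g 0 = 0` achieves this). -/
theorem computation_lemma_fourth_identity
    (d : ℕ) (hd : 1 ≤ d)
    (g : ℕ → ℝ) (hg0 : g 0 = 0) (hgpos : ∀ k : ℕ, 1 ≤ k → 0 < g k)
    (α : ℝ) (hα0 : 0 < α)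
    (hα : ENNReal.ofReal α <
      Filter.liminf (fun k : ℕ => ENNReal.ofReal (g k)) Filter.atTop)
    (w : ℕ → ℝ) (hw : ∀ k : ℕ, w k = α ^ k / ∏ j ∈ Finset.Icc 1 k, g j)
    (Z : ℝ) (hZ : Z = ∑' k : ℕ, w k)
    (ρ : ℝ) (hρ : ρ = ∑' k : ℕ, (k : ℝ) * (w k / Z))
    (ν : (Fin d → ℤ) → Measure ℕ) (hνprob : ∀ i, IsProbabilityMeasure (ν i))
    (hν0 : ∀ n : ℕ, ν 0 {n} = ENNReal.ofReal (((n : ℝ) / ρ) * (w n / Z)))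
    (hνi : ∀ i : Fin d → ℤ, i ≠ 0 → ∀ n : ℕ, ν i {n} = ENNReal.ofReal (w n / Z))
    (Q : Measure ((Fin d → ℤ) → ℕ)) (hQprob : IsProbabilityMeasure Q)
    (hQ : ∀ (s : Finset (Fin d → ℤ)) (a : (Fin d → ℤ) → ℕ),
      Q {η | ∀ i ∈ s, η i = a i} = ∏ i ∈ s, ν i {a i})
    (j : Fin d → ℤ) (hj : j ≠ 0)
    (T : ((Fin d → ℤ) → ℕ) → ((Fin d → ℤ) → ℕ))
    (hT : ∀ η i, T η i =
      η (i - j) + (if i = 0 then 1 else 0) - (if i = j then 1 else 0))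
    (ψ : ((Fin d → ℤ) → ℕ) → ℝ) (hψmeas : Measurable ψ)
    (hψbdd : ∃ C : ℝ, ∀ η, |ψ η| ≤ C) :
    ∫ η, ((η j : ℝ) + 1) * (g (η 0) / (η 0 : ℝ)) * ψ η ∂Q =
      ∫ η, g (η 0) * ψ (T η) ∂Q := by
  exact computation_lemma_fourth_identity_general hg0 hgpos hα0 hw hZ hρ hj.symm hν0 hνi hQ
    (Equiv.subRight j) (sub_self j) hT hψmeas
end
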